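/- arXiv:1208.0713 — 2 statements merged into one kernel-verified Lean document; each statement's English description precedes it below -/
import Mathlib

section
/- For every n ≥ 2 and all words u, v ∈ A*: if u and v agree on rankers from uR^X_{2,2n} (i.e., the same rankers of uR^X_{2,2n} are defined on u and v), then u ⊳_{2,n} v, that is, u and v agree on condensed rankers from uR^X_{2,n}. Dually, if u and v agree on rankers from uR^Y_{2,2n}, then u ⊲_{2,n} v. -/
namespace RankerPaper

variable {A : Type*} [DecidableEq A]

/-- Letters of rankers: `X a` ("next `a` to the right") and `Y a` ("next `a` to the left"). -/
inductive RLetter (A : Type*) where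
  | X : A → RLetter A
  | Y : A → RLetter A
  deriving DecidableEq

/-- Least `a`-position of `u` strictly greater than `q` (positions are 1-indexed). -/
def nextOcc (u : List A) (a : A) (q : ℕ) : Option ℕ :=
  ((List.range (u.length + 2)).filter (fun i => decide (q < i ∧ u[i-1]? = some a))).head?

/-- Greatest `a`-position of `u` strictly less than `q` (positions are 1-indexed). -/
def prevOcc (u : List A) (a : A) (q : ℕ) : Option ℕ :=
  ((List.range (u.length + 2)).filter
    (fun i => decide (1 ≤ i ∧ i < q ∧ u[i-1]? = some a))).getLast?

/-- One evaluation step of a ranker letter from position `q`. -/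
def stepR (u : List A) : RLetter A → ℕ → Option ℕ
  | .X a, q => nextOcc u a q
  | .Y a, q => prevOcc u a q

/-- Evaluation of a ranker from position `q`, processing letters left to right. -/
def evalFrom (u : List A) : List (RLetter A) → ℕ → Option ℕ
  | [], q => some q
  | z :: r, q => (stepR u z q).bind (evalFrom u r)

/-- Starting position: `0` for an `X`-letter, `|u|+1` for a `Y`-letter. -/
def startPos (u : List A) : RLetter A → ℕ
  | .X _ => 0
  | .Y _ => u.length + 1

/-- The position `r(u)` defined by the ranker `r` on `u` (`none` if undefined;
empty rankers are considered undefined, rankers being nonempty words). -/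
def evalR (u : List A) (r : List (RLetter A)) : Option ℕ :=
  match r with
  | [] => none
  | z :: t => evalFrom u (z :: t) (startPos u z)

/-- `r` is defined on `u`. -/
def Defined (u : List A) (r : List (RLetter A)) : Prop := (evalR u r).isSome

/-- The position `r(u)` (defaulting to `0` when undefined). -/
def pos (u : List A) (r : List (RLetter A)) : ℕ := (evalR u r).getD 0

/-- Do two ranker letters have the same direction? -/
def sameDir : RLetter A → RLetter A → Bool
  | .X _, .X _ => true
  | .Y _, .Y _ => true
  | _, _ => false

/-- Number of (alternating) blocks of a ranker. -/
def numBlocks : List (RLetter A) → ℕ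
  | [] => 0
  | [_] => 1
  | z :: w :: t => (if sameDir z w then 0 else 1) + numBlocks (w :: t)

def startsX (r : List (RLetter A)) : Prop := ∃ a t, r = RLetter.X a :: t
def startsY (r : List (RLetter A)) : Prop := ∃ a t, r = RLetter.Y a :: t
def endsX (r : List (RLetter A)) : Prop := ∃ a, r.getLast? = some (RLetter.X a)
def endsY (r : List (RLetter A)) : Prop := ∃ a, r.getLast? = some (RLetter.Y a)

/-- `R^X_{m,n}`: rankers with exactly `m` blocks, depth `n`, starting with an `X`-block. -/
def RX (m n : ℕ) (r : List (RLetter A)) : Prop :=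
  numBlocks r = m ∧ r.length = n ∧ startsX r

/-- `R^Y_{m,n}`: rankers with exactly `m` blocks, depth `n`, starting with a `Y`-block. -/
def RY (m n : ℕ) (r : List (RLetter A)) : Prop :=
  numBlocks r = m ∧ r.length = n ∧ startsY r

/-- `uR^X_{m,n}`. -/
def uRX (m n : ℕ) (r : List (RLetter A)) : Prop :=
  (∃ m' n', m' ≤ m ∧ n' ≤ n ∧ RX m' n' r) ∨ (∃ m' n', m' < m ∧ n' < n ∧ RY m' n' r)

/-- `uR^Y_{m,n}`. -/
def uRY (m n : ℕ) (r : List (RLetter A)) : Prop :=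
  (∃ m' n', m' ≤ m ∧ n' ≤ n ∧ RY m' n' r) ∨ (∃ m' n', m' < m ∧ n' < n ∧ RX m' n' r)

/-- `uR_{m,n} = uR^X_{m,n} ∪ uR^Y_{m,n}`. -/
def uR (m n : ℕ) (r : List (RLetter A)) : Prop := uRX m n r ∨ uRY m n r

/-- `uR^X_m = ∪_{n ≥ m} uR^X_{m,n}`. -/
def uRXm (m : ℕ) (r : List (RLetter A)) : Prop := ∃ n, m ≤ n ∧ uRX m n r

/-- `uR^Y_m = ∪_{n ≥ m} uR^Y_{m,n}`. -/
def uRYm (m : ℕ) (r : List (RLetter A)) : Prop := ∃ n, m ≤ n ∧ uRY m n r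

/-- `r = Z₁ ⋯ Z_n` is condensed on `u`: it is defined on `u` and there is a chain of
open intervals `(0;|u|+1) = (i₀;j₀) ⊃ (i₁;j₁) ⊃ ⋯ ⊃ (i_{n-1};j_{n-1}) ∋ r(u)`
updated according to the pairs `Z_ℓ Z_{ℓ+1}`. -/
def Condensed (u : List A) (r : List (RLetter A)) : Prop :=
  ∃ (p : ℕ) (i j : ℕ → ℕ),
    evalR u r = some p ∧
    i 0 = 0 ∧ j 0 = u.length + 1 ∧
    (∀ ℓ a b, 1 ≤ ℓ → r[ℓ-1]? = some (RLetter.X a) → r[ℓ]? = some (RLetter.X b) →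
        nextOcc u a (i (ℓ-1)) = some (i ℓ) ∧ j ℓ = j (ℓ-1)) ∧
    (∀ ℓ a b, 1 ≤ ℓ → r[ℓ-1]? = some (RLetter.Y a) → r[ℓ]? = some (RLetter.Y b) →
        i ℓ = i (ℓ-1) ∧ prevOcc u a (j (ℓ-1)) = some (j ℓ)) ∧
    (∀ ℓ a b, 1 ≤ ℓ → r[ℓ-1]? = some (RLetter.X a) → r[ℓ]? = some (RLetter.Y b) →
        i ℓ = i (ℓ-1) ∧ nextOcc u a (i (ℓ-1)) = some (j ℓ)) ∧
    (∀ ℓ a b, 1 ≤ ℓ → r[ℓ-1]? = some (RLetter.Y a) → r[ℓ]? = some (RLetter.X b) →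
        prevOcc u a (j (ℓ-1)) = some (i ℓ) ∧ j ℓ = j (ℓ-1)) ∧
    (∀ ℓ, 1 ≤ ℓ → ℓ < r.length →
        i (ℓ-1) ≤ i ℓ ∧ j ℓ ≤ j (ℓ-1) ∧ (i (ℓ-1) < i ℓ ∨ j ℓ < j (ℓ-1))) ∧
    i (r.length - 1) < p ∧ p < j (r.length - 1)

/-- `u` and `v` agree on rankers from the set `R`. -/
def AgreeDef (R : List (RLetter A) → Prop) (u v : List A) : Prop :=
  ∀ r, R r → (Defined u r ↔ Defined v r)

/-- `u` and `v` agree on condensed rankers from the set `R`. -/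
def AgreeCond (R : List (RLetter A) → Prop) (u v : List A) : Prop :=
  ∀ r, R r → (Condensed u r ↔ Condensed v r)

/-- `u ⊳_{m,n} v`. -/
def trir (m n : ℕ) (u v : List A) : Prop := AgreeCond (uRX m n) u v

/-- `u ⊲_{m,n} v`. -/
def tril (m n : ℕ) (u v : List A) : Prop := AgreeCond (uRY m n) u v

/-- The alphabet (set of letters) of a word. -/
def alph (u : List A) : Finset A := u.toFinset

/-- Condition (WI 1). -/
def WI1 (m n : ℕ) (u v : List A) : Prop := AgreeDef (uR m n) u v

/-- Condition (WI 2). -/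
def WI2 (m n : ℕ) (u v : List A) : Prop :=
  ∀ r r', uR m n r → uR (m-1) (n-1) r' →
    Defined u r → Defined v r → Defined u r' → Defined v r' →
    compare (pos u r) (pos u r') = compare (pos v r) (pos v r')

/-- Condition (WI 3). -/
def WI3 (m n : ℕ) (u v : List A) : Prop :=
  ∀ r r', uR m n r → uR m (n-1) r' →
    ((endsX r ∧ endsY r') ∨ (endsY r ∧ endsX r')) →
    Defined u r → Defined v r → Defined u r' → Defined v r' →
    compare (pos u r) (pos u r') = compare (pos v r) (pos v r')

/-- Condition (WI 1c). -/
def WI1c (m n : ℕ) (u v : List A) : Prop := AgreeCond (uR m n) u v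

/-- Condition (WI 2c). -/
def WI2c (m n : ℕ) (u v : List A) : Prop :=
  ∀ r r', uR m n r → uR (m-1) (n-1) r' →
    Condensed u r → Condensed v r → Condensed u r' → Condensed v r' →
    compare (pos u r) (pos u r') = compare (pos v r) (pos v r')

/-- Condition (WI 3c). -/
def WI3c (m n : ℕ) (u v : List A) : Prop :=
  ∀ r r', uR m n r → uR m (n-1) r' →
    ((endsX r ∧ endsY r') ∨ (endsY r ∧ endsX r')) →
    Condensed u r → Condensed v r → Condensed u r' → Condensed v r' →
    compare (pos u r) (pos u r') = compare (pos v r) (pos v r')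

/-!
Think of a ranker as walking inside an open interval: it is condensed iff every step lands inside
the current interval, which is then cut at the position just reached. If an `X`-block ending in
`X_a` is followed by a `Y`-block, condensedness means that the ranker is defined and its `Y`-steps
stay to the right of the position `q` reached just before `X_a`. From a position `p` one can retrace
the letters that led from `0` to `q` backwards by `Y`-steps iff `q < p`, so appending this retracing
to the ranker turns condensedness into definedness of a two-block ranker. At most `n - 2` letters
are appended if the `Y`-block is nonempty, whence the depth `max n (2n - 2)`. The dual follows by
reversing words and exchanging `X` and `Y`.
-/

theorem head?_eq_some_iff_isLeast {α : Type*} [PartialOrder α] {l : List α}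
    (hl : l.Pairwise (· < ·)) {p : α} :
    l.head? = some p ↔ IsLeast {i | i ∈ l} p := by
  cases l with
  | nil => simp [IsLeast]
  | cons b l =>
    have hb : IsLeast {i | i ∈ b :: l} b :=
      ⟨List.mem_cons_self, fun i hi => (List.mem_cons.1 hi).elim Eq.ge
        fun h => (List.rel_of_pairwise_cons hl h).le⟩
    rw [List.head?_cons, Option.some_inj]
    exact ⟨fun h => h ▸ hb, hb.unique⟩

theorem getLast?_eq_some_iff_isGreatest {α : Type*} [PartialOrder α] {l : List α}
    (hl : l.Pairwise (· < ·)) {p : α} :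
    l.getLast? = some p ↔ IsGreatest {i | i ∈ l} p := by
  rcases List.eq_nil_or_concat' l with rfl | ⟨l, b, rfl⟩
  · simp [IsGreatest]
  · have hb : IsGreatest {i | i ∈ l ++ [b]} b :=
      ⟨List.mem_concat_self, fun i hi => (List.mem_append.1 hi).elim
        (fun h => ((List.pairwise_append.1 hl).2.2 i h b (List.mem_singleton_self b)).le)
        fun h => (List.mem_singleton.1 h).le⟩
    rw [List.getLast?_concat, Option.some_inj]
    exact ⟨fun h => h ▸ hb, hb.unique⟩

theorem nextOcc_eq_some_iff {u : List A} {a : A} {q p : ℕ} :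
    nextOcc u a q = some p ↔ IsLeast {i | q < i ∧ u[i - 1]? = some a} p := by
  rw [nextOcc, head?_eq_some_iff_isLeast (List.pairwise_lt_range.filter _)]
  congr! 1
  ext i
  simp only [List.mem_filter, List.mem_range, decide_eq_true_eq, Set.mem_ofPred_eq,
    and_iff_right_iff_imp]
  rintro ⟨-, hi⟩
  have := (List.getElem?_eq_some_iff.1 hi).1
  omega

theorem prevOcc_eq_some_iff {u : List A} {a : A} {q p : ℕ} :
    prevOcc u a q = some p ↔ IsGreatest {i | 1 ≤ i ∧ i < q ∧ u[i - 1]? = some a} p := by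
  rw [prevOcc, getLast?_eq_some_iff_isGreatest (List.pairwise_lt_range.filter _)]
  congr! 1
  ext i
  simp only [List.mem_filter, List.mem_range, decide_eq_true_eq, Set.mem_ofPred_eq,
    and_iff_right_iff_imp]
  rintro ⟨-, -, hi⟩
  have := (List.getElem?_eq_some_iff.1 hi).1
  omega

theorem lt_of_nextOcc_eq_some {u : List A} {a : A} {q p : ℕ} (h : nextOcc u a q = some p) :
    q < p :=
  (nextOcc_eq_some_iff.1 h).1.1

theorem lt_of_prevOcc_eq_some {u : List A} {a : A} {q p : ℕ} (h : prevOcc u a q = some p) :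
    p < q :=
  (prevOcc_eq_some_iff.1 h).1.2.1

theorem stepR_mem_Icc {u : List A} {z : RLetter A} {q p : ℕ} (h : stepR u z q = some p) :
    p ∈ Set.Icc 1 u.length := by
  obtain ⟨a, hp, ha⟩ : ∃ a, 1 ≤ p ∧ u[p - 1]? = some a := by
    cases z with
    | X a =>
      have hleast := (nextOcc_eq_some_iff.1 h).1
      exact ⟨a, Nat.one_le_of_lt hleast.1, hleast.2⟩
    | Y a =>
      have hgreatest := (prevOcc_eq_some_iff.1 h).1
      exact ⟨a, hgreatest.1, hgreatest.2.2⟩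
  have := (List.getElem?_eq_some_iff.1 ha).1
  exact ⟨hp, by omega⟩

theorem exists_prevOcc_eq_some {u : List A} {a : A} {i q : ℕ} (hi : 1 ≤ i) (hiq : i < q)
    (ha : u[i - 1]? = some a) : ∃ p, prevOcc u a q = some p := by
  have hbdd : BddAbove {k | 1 ≤ k ∧ k < q ∧ u[k - 1]? = some a} := ⟨q, fun k hk => hk.2.1.le⟩
  exact ⟨_, prevOcc_eq_some_iff.2
    ⟨Nat.sSup_mem ⟨i, hi, hiq, ha⟩ hbdd, fun _ hk => le_csSup hbdd hk⟩⟩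

theorem exists_lt_prevOcc_iff {u : List A} {a : A} {s t p : ℕ} (h : nextOcc u a s = some t) :
    (∃ w, prevOcc u a p = some w ∧ s < w) ↔ t < p := by
  obtain ⟨⟨hst, hta⟩, hmin⟩ := nextOcc_eq_some_iff.1 h
  constructor
  · rintro ⟨w, hw, hsw⟩
    obtain ⟨-, hwp, hwa⟩ := (prevOcc_eq_some_iff.1 hw).1
    exact (hmin ⟨hsw, hwa⟩).trans_lt hwp
  · intro htp
    obtain ⟨w, hw⟩ := exists_prevOcc_eq_some (Nat.one_le_of_lt hst) htp hta
    exact ⟨w, hw, hst.trans_le ((prevOcc_eq_some_iff.1 hw).2 ⟨Nat.one_le_of_lt hst, htp, hta⟩)⟩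

theorem evalFrom_append (u : List A) (r s : List (RLetter A)) (q : ℕ) :
    evalFrom u (r ++ s) q = (evalFrom u r q).bind (evalFrom u s) := by
  induction r generalizing q with
  | nil => rfl
  | cons z t ih => simp only [List.cons_append, evalFrom, ih, Option.bind_assoc]

theorem evalFrom_pos {u : List A} {r : List (RLetter A)} {q p : ℕ} (hq : 0 < q)
    (h : evalFrom u r q = some p) : 0 < p := by
  induction r generalizing q with
  | nil => exact Option.some_inj.1 h ▸ hq
  | cons z t ih =>
    obtain ⟨q', hq', hp⟩ := Option.bind_eq_some_iff.1 h
    exact ih (stepR_mem_Icc hq').1 hp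

theorem evalFrom_map_Y_le {u : List A} {bs : List A} {q p : ℕ}
    (h : evalFrom u (bs.map .Y) q = some p) : p ≤ q := by
  induction bs generalizing q with
  | nil => exact (Option.some_inj.1 h).ge
  | cons b bs ih =>
    obtain ⟨q', hq', hp⟩ := Option.bind_eq_some_iff.1 h
    exact (ih hp).trans (lt_of_prevOcc_eq_some hq').le

theorem exists_lt_evalFrom_reverse_iff {u : List A} {as : List A} {s q p : ℕ}
    (h : evalFrom u (as.map .X) s = some q) :
    (∃ w, evalFrom u (as.reverse.map .Y) p = some w ∧ s < w) ↔ q < p := by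
  induction as generalizing s with
  | nil =>
    obtain rfl : s = q := Option.some_inj.1 h
    simp [evalFrom]
  | cons a as ih =>
    obtain ⟨t, ht, hq⟩ := Option.bind_eq_some_iff.1 h
    rw [← ih hq]
    simp only [List.reverse_cons, List.map_append, List.map_cons, List.map_nil, evalFrom_append,
      Option.bind_eq_some_iff, evalFrom, stepR, Option.some_inj, exists_eq_right]
    constructor
    · rintro ⟨w, ⟨x, hx, hw⟩, hsw⟩
      exact ⟨x, hx, (exists_lt_prevOcc_iff ht).1 ⟨w, hw, hsw⟩⟩
    · rintro ⟨x, hx, htx⟩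
      obtain ⟨w, hw, hsw⟩ := (exists_lt_prevOcc_iff ht).2 htx
      exact ⟨w, ⟨x, hx, hw⟩, hsw⟩

/-- The ranker `r` can be evaluated from position `p` of the interval `(i;j)` in a condensed way:
every step lands strictly inside the current interval, which is cut at the current position to
the side towards which the next letter points. -/
def CondensedFrom (u : List A) : List (RLetter A) → ℕ → ℕ → ℕ → Prop
  | [], _, _, _ => True
  | .X a :: t, _, p, j => ∃ q, nextOcc u a p = some q ∧ q < j ∧ CondensedFrom u t p q j
  | .Y a :: t, i, p, _ => ∃ q, prevOcc u a p = some q ∧ i < q ∧ CondensedFrom u t i q p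

namespace RLetter

/-- The mirror image of a ranker letter, exchanging left and right. -/
def mirror : RLetter A → RLetter A
  | .X a => .Y a
  | .Y a => .X a

/-- The endpoint of the interval `(i;j)` from which a ranker letter starts its search. -/
def source : RLetter A → ℕ → ℕ → ℕ
  | .X _, i, _ => i
  | .Y _, _, j => j

omit [DecidableEq A] in
theorem mirror_mirror (z : RLetter A) : z.mirror.mirror = z := by
  cases z <;> rfl

end RLetter

/-- The intervals `(i ℓ; j ℓ)` witness that `r` is condensed with value `p`, starting from an
arbitrary interval `(i 0; j 0)`. The four update rules of `Condensed` are merged into one: the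
endpoint from which the next letter starts moves to the position just reached, while the opposite
endpoint (the one from which its mirror image would start) stays. -/
structure IsCondensingChain (u : List A) (r : List (RLetter A)) (p : ℕ) (i j : ℕ → ℕ) : Prop where
  stepR_eq : ∀ ℓ z w, r[ℓ]? = some z → r[ℓ + 1]? = some w →
    stepR u z (z.source (i ℓ) (j ℓ)) = some (w.source (i (ℓ + 1)) (j (ℓ + 1)))
  mirror_source_eq : ∀ ℓ w, r[ℓ + 1]? = some w →
    w.mirror.source (i (ℓ + 1)) (j (ℓ + 1)) = w.mirror.source (i ℓ) (j ℓ)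
  ssubset : ∀ ℓ, ℓ + 1 < r.length →
    i ℓ ≤ i (ℓ + 1) ∧ j (ℓ + 1) ≤ j ℓ ∧ (i ℓ < i (ℓ + 1) ∨ j (ℓ + 1) < j ℓ)
  mem_last : i (r.length - 1) < p ∧ p < j (r.length - 1)

theorem condensed_iff_exists_isCondensingChain {u : List A} {r : List (RLetter A)} :
    Condensed u r ↔ ∃ p i j, evalR u r = some p ∧ i 0 = 0 ∧ j 0 = u.length + 1 ∧
      IsCondensingChain u r p i j := by
  constructor
  · rintro ⟨p, i, j, hp, hi, hj, hXX, hYY, hXY, hYX, hsub, hmem⟩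
    refine ⟨p, i, j, hp, hi, hj, ?_, ?_, fun ℓ hℓ => hsub (ℓ + 1) (by omega) hℓ, hmem⟩
    · rintro ℓ (a | a) (b | b) hz hw
      · exact (hXX (ℓ + 1) a b (by omega) hz hw).1
      · exact (hXY (ℓ + 1) a b (by omega) hz hw).2
      · exact (hYX (ℓ + 1) a b (by omega) hz hw).1
      · exact (hYY (ℓ + 1) a b (by omega) hz hw).2
    · intro ℓ w hw
      obtain ⟨z, hz⟩ : ∃ z, r[ℓ]? = some z :=
        ⟨_, List.getElem?_eq_getElem (by have := (List.getElem?_eq_some_iff.1 hw).1; omega)⟩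
      rcases z with a | a <;> rcases w with b | b
      · exact (hXX (ℓ + 1) a b (by omega) hz hw).2
      · exact (hXY (ℓ + 1) a b (by omega) hz hw).1
      · exact (hYX (ℓ + 1) a b (by omega) hz hw).2
      · exact (hYY (ℓ + 1) a b (by omega) hz hw).1
  · rintro ⟨p, i, j, hp, hi, hj, hstep, hmir, hsub, hmem⟩
    refine ⟨p, i, j, hp, hi, hj, ?_, ?_, ?_, ?_, ?_, hmem⟩
    · rintro (_ | ℓ) a b hℓ hz hw
      · omega
      · exact ⟨hstep ℓ _ _ hz hw, hmir ℓ _ hw⟩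
    · rintro (_ | ℓ) a b hℓ hz hw
      · omega
      · exact ⟨hmir ℓ _ hw, hstep ℓ _ _ hz hw⟩
    · rintro (_ | ℓ) a b hℓ hz hw
      · omega
      · exact ⟨hmir ℓ _ hw, hstep ℓ _ _ hz hw⟩
    · rintro (_ | ℓ) a b hℓ hz hw
      · omega
      · exact ⟨hstep ℓ _ _ hz hw, hmir ℓ _ hw⟩
    · rintro (_ | ℓ) hℓ hlen
      · omega
      · exact hsub ℓ hlen

theorem isCondensingChain_cons_cons_iff {u : List A} {z w : RLetter A} {t : List (RLetter A)}
    {p : ℕ} {i j : ℕ → ℕ} :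
    IsCondensingChain u (z :: w :: t) p i j ↔
      stepR u z (z.source (i 0) (j 0)) = some (w.source (i 1) (j 1)) ∧
      w.mirror.source (i 1) (j 1) = w.mirror.source (i 0) (j 0) ∧
      (i 0 ≤ i 1 ∧ j 1 ≤ j 0 ∧ (i 0 < i 1 ∨ j 1 < j 0)) ∧
      IsCondensingChain u (w :: t) p (fun ℓ => i (ℓ + 1)) (fun ℓ => j (ℓ + 1)) := by
  constructor
  · rintro ⟨hstep, hmir, hsub, hmem⟩
    exact ⟨hstep 0 z w rfl rfl, hmir 0 w rfl, hsub 0 (by simp), fun ℓ => hstep (ℓ + 1),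
      fun ℓ => hmir (ℓ + 1), fun ℓ hℓ => hsub (ℓ + 1) (Nat.succ_lt_succ hℓ), hmem⟩
  · rintro ⟨hstep₀, hmir₀, hsub₀, hstep, hmir, hsub, hmem⟩
    refine ⟨?_, ?_, ?_, hmem⟩
    · rintro (_ | ℓ) z' w' hz hw
      · obtain rfl : z = z' := Option.some_inj.1 hz
        obtain rfl : w = w' := Option.some_inj.1 hw
        exact hstep₀
      · exact hstep ℓ z' w' hz hw
    · rintro (_ | ℓ) w' hw
      · obtain rfl : w = w' := Option.some_inj.1 hw
        exact hmir₀
      · exact hmir ℓ w' hw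
    · rintro (_ | ℓ) hℓ
      · exact hsub₀
      · exact hsub ℓ (Nat.lt_of_succ_lt_succ hℓ)

theorem isCondensingChain_singleton_iff {u : List A} {z : RLetter A} {p : ℕ} {i j : ℕ → ℕ} :
    IsCondensingChain u [z] p i j ↔ i 0 < p ∧ p < j 0 :=
  ⟨fun h => h.mem_last, fun h => ⟨by simp, by simp, by simp, h⟩⟩

theorem CondensedFrom.lt {u : List A} {z : RLetter A} {t : List (RLetter A)} {i j : ℕ}
    (h : CondensedFrom u (z :: t) i (z.source i j) j) : i < j := by
  rcases z with a | a
  · obtain ⟨q, hq, hqj, -⟩ := h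
    exact (lt_of_nextOcc_eq_some hq).trans hqj
  · obtain ⟨q, hq, hiq, -⟩ := h
    exact hiq.trans (lt_of_prevOcc_eq_some hq)

theorem condensedFrom_singleton_iff {u : List A} {z : RLetter A} {i j : ℕ} :
    CondensedFrom u [z] i (z.source i j) j ↔
      ∃ p, stepR u z (z.source i j) = some p ∧ i < p ∧ p < j := by
  rcases z with a | a <;> refine exists_congr fun p => and_congr_right fun hp => ?_
  · have hip : i < p := lt_of_nextOcc_eq_some hp
    simp only [CondensedFrom, and_true, hip, true_and]
  · have hpj : p < j := lt_of_prevOcc_eq_some hp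
    simp only [CondensedFrom, and_true, hpj]

theorem condensedFrom_cons_cons_iff {u : List A} {z w : RLetter A} {t : List (RLetter A)}
    {i j : ℕ} :
    CondensedFrom u (z :: w :: t) i (z.source i j) j ↔ ∃ i' j',
      stepR u z (z.source i j) = some (w.source i' j') ∧
      w.mirror.source i' j' = w.mirror.source i j ∧
      (i ≤ i' ∧ j' ≤ j ∧ (i < i' ∨ j' < j)) ∧
      CondensedFrom u (w :: t) i' (w.source i' j') j' := by
  constructor
  · rcases z with a | a <;> rintro ⟨q, hq, hmem, h⟩
    · have hiq : i < q := lt_of_nextOcc_eq_some hq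
      rcases w with b | b
      · exact ⟨q, j, hq, rfl, by omega, h⟩
      · exact ⟨i, q, hq, rfl, by omega, h⟩
    · have hqj : q < j := lt_of_prevOcc_eq_some hq
      rcases w with b | b
      · exact ⟨q, j, hq, rfl, by omega, h⟩
      · exact ⟨i, q, hq, rfl, by omega, h⟩
  · rintro ⟨i', j', hstep, hmir, hsub, h⟩
    have hlt := h.lt
    rcases w with b | b
    · obtain rfl : j' = j := hmir
      rcases z with a | a
      · exact ⟨i', hstep, hlt, h⟩
      · exact ⟨i', hstep, by omega, h⟩
    · obtain rfl : i' = i := hmir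
      rcases z with a | a
      · exact ⟨j', hstep, by omega, h⟩
      · exact ⟨j', hstep, hlt, h⟩

theorem condensedFrom_iff_exists_isCondensingChain {u : List A} {z : RLetter A}
    {t : List (RLetter A)} {i₀ j₀ : ℕ} :
    CondensedFrom u (z :: t) i₀ (z.source i₀ j₀) j₀ ↔
      ∃ p i j, evalFrom u (z :: t) (z.source i₀ j₀) = some p ∧ i 0 = i₀ ∧ j 0 = j₀ ∧
        IsCondensingChain u (z :: t) p i j := by
  induction t generalizing z i₀ j₀ with
  | nil =>
    simp only [condensedFrom_singleton_iff, isCondensingChain_singleton_iff, evalFrom,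
      Option.bind_fun_some]
    constructor
    · rintro ⟨p, hp, hmem⟩
      exact ⟨p, fun _ => i₀, fun _ => j₀, hp, rfl, rfl, hmem⟩
    · rintro ⟨p, i, j, hp, rfl, rfl, hmem⟩
      exact ⟨p, hp, hmem⟩
  | cons w t ih =>
    rw [condensedFrom_cons_cons_iff]
    constructor
    · rintro ⟨i', j', hstep, hmir, hsub, h⟩
      obtain ⟨p, i, j, hp, rfl, rfl, hchain⟩ := ih.1 h
      exact ⟨p, fun | 0 => i₀ | ℓ + 1 => i ℓ, fun | 0 => j₀ | ℓ + 1 => j ℓ,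
        Option.bind_eq_some_iff.2 ⟨_, hstep, hp⟩, rfl, rfl,
        isCondensingChain_cons_cons_iff.2 ⟨hstep, hmir, hsub, hchain⟩⟩
    · rintro ⟨p, i, j, hp, rfl, rfl, hchain⟩
      obtain ⟨hstep, hmir, hsub, hchain⟩ := isCondensingChain_cons_cons_iff.1 hchain
      rw [evalFrom, hstep] at hp
      exact ⟨i 1, j 1, hstep, hmir, hsub, ih.2 ⟨p, _, _, hp, rfl, rfl, hchain⟩⟩

omit [DecidableEq A] in
theorem startPos_eq_source (u : List A) (z : RLetter A) :
    startPos u z = z.source 0 (u.length + 1) := by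
  cases z <;> rfl

theorem condensed_cons_iff_condensedFrom {u : List A} {z : RLetter A} {t : List (RLetter A)} :
    Condensed u (z :: t) ↔ CondensedFrom u (z :: t) 0 (startPos u z) (u.length + 1) := by
  rw [condensed_iff_exists_isCondensingChain, startPos_eq_source,
    condensedFrom_iff_exists_isCondensingChain, ← startPos_eq_source]
  rfl

/-! ### Reflection -/

theorem getElem?_reverse_pred {α : Type*} {u : List α} {i : ℕ} (hi : 1 ≤ i)
    (hiu : i ≤ u.length) : u.reverse[i - 1]? = u[u.length + 1 - i - 1]? := by
  rw [List.getElem?_reverse (by omega)]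
  congr 1
  omega

theorem stepR_reverse_mirror_of_eq_some {u : List A} {z : RLetter A} {p q : ℕ}
    (hp : p ≤ u.length + 1) (h : stepR u z p = some q) :
    stepR u.reverse z.mirror (u.length + 1 - p) = some (u.length + 1 - q) := by
  obtain ⟨hq, hqu⟩ := stepR_mem_Icc h
  have hget : u.reverse[u.length + 1 - q - 1]? = u[q - 1]? := by
    rw [getElem?_reverse_pred (by omega) (by omega), Nat.sub_sub_self (by omega)]
  rcases z with a | a
  · obtain ⟨⟨hpq, ha⟩, hmin⟩ := nextOcc_eq_some_iff.1 h
    refine prevOcc_eq_some_iff.2 ⟨⟨by omega, by omega, hget.trans ha⟩, fun k hk => ?_⟩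
    obtain ⟨hk, hkp, hka⟩ := hk
    rw [getElem?_reverse_pred hk (by omega)] at hka
    have := hmin ⟨by omega, hka⟩
    omega
  · obtain ⟨⟨-, hqp, ha⟩, hmax⟩ := prevOcc_eq_some_iff.1 h
    refine nextOcc_eq_some_iff.2 ⟨⟨by omega, hget.trans ha⟩, fun k hk => ?_⟩
    obtain ⟨hpk, hka⟩ := hk
    by_contra! hkq
    rw [getElem?_reverse_pred (by omega) (by omega)] at hka
    have := hmax ⟨by omega, by omega, hka⟩
    omega

theorem stepR_reverse_mirror {u : List A} {z : RLetter A} {p : ℕ} (hp : p ≤ u.length + 1) :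
    stepR u.reverse z.mirror (u.length + 1 - p) =
      (stepR u z p).map (u.length + 1 - ·) := by
  cases h : stepR u z p with
  | some q => exact stepR_reverse_mirror_of_eq_some hp h
  | none =>
    refine Option.eq_none_iff_forall_ne_some.2 fun q hq => ?_
    have hmir := stepR_reverse_mirror_of_eq_some (by simp) hq
    rw [List.reverse_reverse, RLetter.mirror_mirror, List.length_reverse, Nat.sub_sub_self hp,
      h] at hmir
    cases hmir

theorem evalFrom_reverse_mirror {u : List A} {r : List (RLetter A)} {p : ℕ}
    (hp : p ≤ u.length + 1) :
    evalFrom u.reverse (r.map .mirror) (u.length + 1 - p) =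
      (evalFrom u r p).map (u.length + 1 - ·) := by
  induction r generalizing p with
  | nil => rfl
  | cons z t ih =>
    rw [List.map_cons, evalFrom, evalFrom, stepR_reverse_mirror hp]
    cases h : stepR u z p with
    | none => rfl
    | some q => exact ih ((stepR_mem_Icc h).2.trans (Nat.le_succ _))

omit [DecidableEq A] in
theorem startPos_reverse_mirror (u : List A) (z : RLetter A) :
    startPos u.reverse z.mirror = u.length + 1 - startPos u z := by
  cases z <;> simp [startPos, RLetter.mirror]

omit [DecidableEq A] in
theorem startPos_le (u : List A) (z : RLetter A) : startPos u z ≤ u.length + 1 := by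
  cases z <;> simp [startPos]

theorem defined_reverse_mirror_iff {u : List A} {r : List (RLetter A)} :
    Defined u.reverse (r.map .mirror) ↔ Defined u r := by
  cases r with
  | nil => rfl
  | cons z t =>
    have heval := evalFrom_reverse_mirror (u := u) (r := z :: t) (startPos_le u z)
    rw [← startPos_reverse_mirror] at heval
    rw [Defined, Defined, List.map_cons, evalR, evalR, ← List.map_cons, heval, Option.isSome_map]

theorem condensedFrom_reverse_mirror_iff {u : List A} {r : List (RLetter A)} {i p j : ℕ}
    (hi : i ≤ u.length + 1) (hp : p ≤ u.length + 1) (hj : j ≤ u.length + 1) :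
    CondensedFrom u.reverse (r.map .mirror) (u.length + 1 - j) (u.length + 1 - p)
      (u.length + 1 - i) ↔ CondensedFrom u r i p j := by
  induction r generalizing i p j with
  | nil => rfl
  | cons z t ih =>
    have hstep := stepR_reverse_mirror (z := z) hp
    rcases z with a | a
    · simp only [List.map_cons, RLetter.mirror, CondensedFrom, stepR] at hstep ⊢
      simp only [hstep, Option.map_eq_some_iff, exists_exists_and_eq_and]
      refine exists_congr fun q => and_congr_right fun hq => ?_
      have := (stepR_mem_Icc (z := .X a) hq).2
      rw [ih hp (by omega) hj]
      refine and_congr_left fun _ => by omega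
    · simp only [List.map_cons, RLetter.mirror, CondensedFrom, stepR] at hstep ⊢
      simp only [hstep, Option.map_eq_some_iff, exists_exists_and_eq_and]
      refine exists_congr fun q => and_congr_right fun hq => ?_
      have := (stepR_mem_Icc (z := .Y a) hq).2
      rw [ih hi (by omega) hp]
      refine and_congr_left fun _ => by omega

theorem condensed_reverse_mirror_iff {u : List A} {r : List (RLetter A)} :
    Condensed u.reverse (r.map .mirror) ↔ Condensed u r := by
  cases r with
  | nil => simp [Condensed, evalR]
  | cons z t =>
    rw [List.map_cons, condensed_cons_iff_condensedFrom, condensed_cons_iff_condensedFrom,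
      ← condensedFrom_reverse_mirror_iff (Nat.zero_le _) (startPos_le u z) le_rfl, List.map_cons,
      startPos_reverse_mirror, List.length_reverse, Nat.sub_self, Nat.sub_zero]

/-! ### Rankers with at most two blocks -/

theorem lt_of_condensedFrom_map_X_append {u : List A} {as : List A} {a : A}
    {t : List (RLetter A)} {i p j : ℕ} (h : CondensedFrom u (as.map .X ++ .X a :: t) i p j) :
    p < j := by
  cases as with
  | nil =>
    obtain ⟨q, hq, hqj, -⟩ := h
    exact (lt_of_nextOcc_eq_some hq).trans hqj
  | cons b as =>
    obtain ⟨q, hq, hqj, -⟩ := h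
    exact (lt_of_nextOcc_eq_some hq).trans hqj

theorem condensedFrom_map_X_append_iff {u : List A} {as : List A} {a : A}
    {t : List (RLetter A)} {i p j : ℕ} :
    CondensedFrom u (as.map .X ++ .X a :: t) i p j ↔
      ∃ q, evalFrom u (as.map .X) p = some q ∧ CondensedFrom u (.X a :: t) q q j := by
  induction as generalizing i p with
  | nil => simp only [List.map_nil, List.nil_append, evalFrom, Option.some_inj,
      exists_eq_left', CondensedFrom]
  | cons b as ih =>
    simp only [List.map_cons, List.cons_append, CondensedFrom, evalFrom, stepR,
      Option.bind_eq_some_iff]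
    constructor
    · rintro ⟨q', hq', -, h⟩
      obtain ⟨q, hq, h⟩ := ih.1 h
      exact ⟨q, ⟨q', hq', hq⟩, h⟩
    · rintro ⟨q, ⟨q', hq', hq⟩, h⟩
      have hcond : CondensedFrom u (as.map .X ++ .X a :: t) p q' j := ih.2 ⟨q, hq, h⟩
      exact ⟨q', hq', lt_of_condensedFrom_map_X_append hcond, hcond⟩

theorem condensedFrom_map_Y_iff {u : List A} {bs : List A} {i p j : ℕ} (hip : i < p) :
    CondensedFrom u (bs.map .Y) i p j ↔ ∃ w, evalFrom u (bs.map .Y) p = some w ∧ i < w := by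
  induction bs generalizing p j with
  | nil => simpa [CondensedFrom, evalFrom] using hip
  | cons b bs ih =>
    simp only [List.map_cons, CondensedFrom, evalFrom, stepR, Option.bind_eq_some_iff]
    constructor
    · rintro ⟨q, hq, hiq, h⟩
      obtain ⟨w, hw, hiw⟩ := (ih hiq).1 h
      exact ⟨w, ⟨q, hq, hw⟩, hiw⟩
    · rintro ⟨w, ⟨q, hq, hw⟩, hiw⟩
      have hiq : i < q := hiw.trans_le (evalFrom_map_Y_le hw)
      exact ⟨q, hq, hiq, (ih hiq).2 ⟨w, hw, hiw⟩⟩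

theorem evalR_map_X_append (u : List A) (as : List A) (a : A) (t : List (RLetter A)) :
    evalR u (as.map .X ++ .X a :: t) = evalFrom u (as.map .X ++ .X a :: t) 0 := by
  cases as <;> rfl

theorem defined_map_X_append_iff {u : List A} {as : List A} {a : A} {t : List (RLetter A)} :
    Defined u (as.map .X ++ .X a :: t) ↔ ∃ q q' w, evalFrom u (as.map .X) 0 = some q ∧
      nextOcc u a q = some q' ∧ evalFrom u t q' = some w := by
  simp only [Defined, evalR_map_X_append, evalFrom_append, evalFrom, stepR,
    Option.isSome_iff_exists, Option.bind_eq_some_iff]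
  constructor
  · rintro ⟨w, q, hq, q', hq', hw⟩
    exact ⟨q, q', w, hq, hq', hw⟩
  · rintro ⟨q, q', w, hq, hq', hw⟩
    exact ⟨w, q, hq, q', hq', hw⟩

theorem condensed_map_X_append_map_Y_iff {u : List A} {as : List A} {a : A} {bs : List A} :
    Condensed u (as.map .X ++ .X a :: bs.map .Y) ↔
      ∃ q q' w, evalFrom u (as.map .X) 0 = some q ∧ nextOcc u a q = some q' ∧
        evalFrom u (bs.map .Y) q' = some w ∧ q < w := by
  have hfrom : Condensed u (as.map .X ++ .X a :: bs.map .Y) ↔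
      CondensedFrom u (as.map .X ++ .X a :: bs.map .Y) 0 0 (u.length + 1) := by
    cases as <;> exact condensed_cons_iff_condensedFrom
  rw [hfrom, condensedFrom_map_X_append_iff]
  constructor
  · rintro ⟨q, hq, q', hq', -, h⟩
    obtain ⟨w, hw, hqw⟩ := (condensedFrom_map_Y_iff (lt_of_nextOcc_eq_some hq')).1 h
    exact ⟨q, q', w, hq, hq', hw, hqw⟩
  · rintro ⟨q, q', w, hq, hq', hw, hqw⟩
    exact ⟨q, hq, q', hq', Nat.lt_succ_of_le (stepR_mem_Icc (z := .X a) hq').2,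
      (condensedFrom_map_Y_iff (lt_of_nextOcc_eq_some hq')).2 ⟨w, hw, hqw⟩⟩

theorem condensed_map_X_append_map_Y_iff_defined {u : List A} {as : List A} {a : A}
    {bs : List A} :
    Condensed u (as.map .X ++ .X a :: bs.map .Y) ↔
      Defined u (as.map .X ++ .X a :: (bs ++ as.reverse).map .Y) := by
  rw [condensed_map_X_append_map_Y_iff, defined_map_X_append_iff]
  simp only [List.map_append, evalFrom_append, Option.bind_eq_some_iff]
  constructor
  · rintro ⟨q, q', w, hq, hq', hw, hqw⟩
    obtain ⟨x, hx, -⟩ := (exists_lt_evalFrom_reverse_iff hq).2 hqw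
    exact ⟨q, q', x, hq, hq', w, hw, hx⟩
  · rintro ⟨q, q', x, hq, hq', w, hw, hx⟩
    have hw₀ : 0 < w := evalFrom_pos (Nat.zero_lt_of_lt (lt_of_nextOcc_eq_some hq')) hw
    exact ⟨q, q', w, hq, hq', hw,
      (exists_lt_evalFrom_reverse_iff hq).1 ⟨x, hx, evalFrom_pos hw₀ hx⟩⟩

theorem condensed_map_X_concat_iff_defined {u : List A} {as : List A} {a : A} :
    Condensed u (as.map .X ++ [.X a]) ↔ Defined u (as.map .X ++ [.X a]) := by
  rw [defined_map_X_append_iff, ← List.map_nil (f := RLetter.Y),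
    condensed_map_X_append_map_Y_iff]
  refine exists_congr fun q => exists_congr fun q' => exists_congr fun w => ?_
  simp only [List.map_nil, evalFrom, Option.some_inj]
  refine and_congr_right fun _ => and_congr_right fun hq' => and_iff_left_of_imp ?_
  rintro rfl
  exact lt_of_nextOcc_eq_some hq'

theorem condensed_map_Y_iff_defined {u : List A} {bs : List A} :
    Condensed u (bs.map .Y) ↔ Defined u (bs.map .Y) := by
  cases bs with
  | nil => simp [Condensed, Defined, evalR]
  | cons b bs =>
    have hpos : (∃ w, evalFrom u ((b :: bs).map .Y) (u.length + 1) = some w ∧ 0 < w) ↔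
        Defined u ((b :: bs).map .Y) := by
      rw [Defined, Option.isSome_iff_exists]
      exact exists_congr fun w => and_iff_left_of_imp (evalFrom_pos (Nat.succ_pos _))
    rw [← hpos, ← condensedFrom_map_Y_iff (j := u.length + 1) (Nat.succ_pos _)]
    exact condensed_cons_iff_condensedFrom

section NumBlocks

omit [DecidableEq A]

theorem one_le_numBlocks_cons (z : RLetter A) (t : List (RLetter A)) :
    1 ≤ numBlocks (z :: t) := by
  induction t generalizing z with
  | nil => rfl
  | cons w t ih => exact (ih w).trans (Nat.le_add_left _ _)

theorem numBlocks_map_mirror (r : List (RLetter A)) :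
    numBlocks (r.map .mirror) = numBlocks r := by
  induction r with
  | nil => rfl
  | cons z t ih =>
    cases t with
    | nil => rfl
    | cons w t =>
      have hdir : sameDir z.mirror w.mirror = sameDir z w := by cases z <;> cases w <;> rfl
      simp only [List.map_cons, numBlocks, hdir] at ih ⊢
      rw [ih]

theorem numBlocks_append_le (r s : List (RLetter A)) :
    numBlocks (r ++ s) ≤ numBlocks r + numBlocks s := by
  induction r with
  | nil => exact Nat.le_add_left _ _
  | cons z t ih =>
    cases t with
    | nil =>
      cases s with
      | nil => rfl
      | cons w s =>
        simp only [List.cons_append, List.nil_append, numBlocks]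
        split <;> omega
    | cons w t =>
      simp only [List.cons_append, numBlocks] at ih ⊢
      omega

theorem numBlocks_map_X_le_one (as : List A) : numBlocks (as.map .X) ≤ 1 := by
  induction as with
  | nil => exact Nat.zero_le _
  | cons a as ih =>
    cases as with
    | nil => rfl
    | cons b as => simpa only [List.map_cons, numBlocks, sameDir, if_true, zero_add] using ih

theorem numBlocks_map_Y_le_one (bs : List A) : numBlocks (bs.map .Y) ≤ 1 := by
  rw [show bs.map .Y = (bs.map .X).map RLetter.mirror by rw [List.map_map]; rfl,
    numBlocks_map_mirror]
  exact numBlocks_map_X_le_one bs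

theorem numBlocks_map_X_append_map_Y_le_two (as bs : List A) (a : A) :
    numBlocks (as.map .X ++ .X a :: bs.map .Y) ≤ 2 := by
  rw [show as.map .X ++ .X a :: bs.map .Y = (as ++ [a]).map .X ++ bs.map RLetter.Y by simp]
  exact (numBlocks_append_le _ _).trans
    (Nat.add_le_add (numBlocks_map_X_le_one _) (numBlocks_map_Y_le_one _))

theorem exists_eq_map_Y_of_numBlocks_le_one {b : A} {t : List (RLetter A)}
    (h : numBlocks (.Y b :: t) ≤ 1) : ∃ bs : List A, t = bs.map .Y := by
  induction t generalizing b with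
  | nil => exact ⟨[], rfl⟩
  | cons w t ih =>
    rcases w with c | c
    · have := one_le_numBlocks_cons (.X c) t
      simp only [numBlocks, sameDir, Bool.false_eq_true, if_false] at h
      omega
    · obtain ⟨bs, rfl⟩ :=
        ih (b := c) (by simpa only [numBlocks, sameDir, if_true, zero_add] using h)
      exact ⟨c :: bs, rfl⟩

theorem exists_eq_map_X_append_map_Y_of_numBlocks_le_two {a : A} {t : List (RLetter A)}
    (h : numBlocks (.X a :: t) ≤ 2) :
    ∃ (as : List A) (c : A) (bs : List A), .X a :: t = as.map .X ++ .X c :: bs.map .Y := by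
  induction t generalizing a with
  | nil => exact ⟨[], a, [], rfl⟩
  | cons w t ih =>
    rcases w with c | c
    · obtain ⟨as, d, bs, hbs⟩ :=
        ih (a := c) (by simpa only [numBlocks, sameDir, if_true, zero_add] using h)
      exact ⟨a :: as, d, bs, by rw [hbs]; rfl⟩
    · simp only [numBlocks, sameDir, Bool.false_eq_true, if_false] at h
      obtain ⟨bs, rfl⟩ := exists_eq_map_Y_of_numBlocks_le_one (b := c) (t := t) (by omega)
      exact ⟨[], a, c :: bs, rfl⟩

theorem startsX_map_X_append (as : List A) (a : A) (t : List (RLetter A)) :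
    startsX (as.map .X ++ .X a :: t) := by
  cases as with
  | nil => exact ⟨a, t, rfl⟩
  | cons b as => exact ⟨b, _, rfl⟩

theorem startsX_map_mirror {r : List (RLetter A)} : startsX (r.map .mirror) ↔ startsY r := by
  rcases r with _ | ⟨a | a, t⟩ <;> simp [startsX, startsY, RLetter.mirror]

theorem startsY_map_mirror {r : List (RLetter A)} : startsY (r.map .mirror) ↔ startsX r := by
  rcases r with _ | ⟨a | a, t⟩ <;> simp [startsX, startsY, RLetter.mirror]

theorem uRX_iff {m n : ℕ} {r : List (RLetter A)} :
    uRX m n r ↔ (numBlocks r ≤ m ∧ r.length ≤ n ∧ startsX r) ∨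
      (numBlocks r < m ∧ r.length < n ∧ startsY r) := by
  simp [uRX, RX, RY, ← and_assoc]

theorem uRX_map_mirror_iff {m n : ℕ} {r : List (RLetter A)} :
    uRX m n (r.map .mirror) ↔ uRY m n r := by
  simp only [uRX, uRY, RX, RY, numBlocks_map_mirror, List.length_map, startsX_map_mirror,
    startsY_map_mirror]

theorem uRX_mono {m n n' : ℕ} (h : n ≤ n') {r : List (RLetter A)} (hr : uRX m n r) :
    uRX m n' r := by
  rw [uRX_iff] at hr ⊢
  rcases hr with ⟨hblocks, hlen, hstart⟩ | ⟨hblocks, hlen, hstart⟩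
  · exact .inl ⟨hblocks, hlen.trans h, hstart⟩
  · exact .inr ⟨hblocks, hlen.trans_le h, hstart⟩

theorem uRY_mono {m n n' : ℕ} (h : n ≤ n') {r : List (RLetter A)} (hr : uRY m n r) :
    uRY m n' r :=
  uRX_map_mirror_iff.1 (uRX_mono h (uRX_map_mirror_iff.2 hr))

end NumBlocks

theorem exists_uRX_condensed_iff_defined {n : ℕ} {r : List (RLetter A)} (hr : uRX 2 n r) :
    ∃ r', uRX 2 (max n (2 * n - 2)) r' ∧ ∀ u : List A, Condensed u r ↔ Defined u r' := by
  have hle : n ≤ max n (2 * n - 2) := le_max_left _ _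
  rcases uRX_iff.1 hr with ⟨hblocks, hlen, a, t, rfl⟩ | ⟨hblocks, -, b, t, rfl⟩
  · obtain ⟨as, c, _ | ⟨b, bs⟩, hshape⟩ :=
      exists_eq_map_X_append_map_Y_of_numBlocks_le_two hblocks
    · exact ⟨_, uRX_mono hle hr, fun u => hshape ▸ condensed_map_X_concat_iff_defined⟩
    · refine ⟨as.map .X ++ .X c :: (b :: bs ++ as.reverse).map .Y, uRX_iff.2 (.inl
        ⟨numBlocks_map_X_append_map_Y_le_two _ _ _, ?_, startsX_map_X_append _ _ _⟩),
        fun u => hshape ▸ condensed_map_X_append_map_Y_iff_defined⟩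
      rw [hshape] at hlen
      simp only [List.length_append, List.length_map, List.length_cons, List.length_reverse]
        at hlen ⊢
      omega
  · obtain ⟨bs, rfl⟩ := exists_eq_map_Y_of_numBlocks_le_one (Nat.le_of_lt_succ hblocks)
    exact ⟨_, uRX_mono hle hr, fun u => condensed_map_Y_iff_defined (bs := b :: bs)⟩

theorem trir_two_of_agreeDef {n : ℕ} {u v : List A}
    (h : AgreeDef (uRX 2 (max n (2 * n - 2))) u v) : trir 2 n u v := fun r hr => by
  obtain ⟨r', hr', hiff⟩ := exists_uRX_condensed_iff_defined hr
  rw [hiff, hiff, h r' hr']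

theorem agreeDef_uRX_reverse {m n : ℕ} {u v : List A} (h : AgreeDef (uRY m n) u v) :
    AgreeDef (uRX m n) u.reverse v.reverse := fun r hr => by
  obtain ⟨s, rfl⟩ : ∃ s : List (RLetter A), r = s.map .mirror :=
    ⟨r.map .mirror, by simp [Function.comp_def, RLetter.mirror_mirror]⟩
  rw [defined_reverse_mirror_iff, h s (uRX_map_mirror_iff.1 hr), defined_reverse_mirror_iff]

theorem tril_of_trir_reverse {m n : ℕ} {u v : List A} (h : trir m n u.reverse v.reverse) :
    tril m n u v := fun r hr => by
  rw [← condensed_reverse_mirror_iff, h _ (uRX_map_mirror_iff.2 hr), condensed_reverse_mirror_iff]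

theorem statement17_general (n : ℕ) (u v : List A) :
    (AgreeDef (uRX 2 (max n (2 * n - 2))) u v → trir 2 n u v) ∧
    (AgreeDef (uRY 2 (max n (2 * n - 2))) u v → tril 2 n u v) :=
  ⟨trir_two_of_agreeDef,
    fun h => tril_of_trir_reverse (trir_two_of_agreeDef (agreeDef_uRX_reverse h))⟩

/-- For `n ≥ 2`, agreement on rankers from `uR^X_{2,2n}` implies
`u ⊳_{2,n} v`; dually for `Y`. -/
theorem statement17 (n : ℕ) (hn : 2 ≤ n) (u v : List A) :
    ((∀ r, uRX 2 (2*n) r → (Defined u r ↔ Defined v r)) → trir 2 n u v) ∧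
    ((∀ r, uRY 2 (2*n) r → (Defined u r ↔ Defined v r)) → tril 2 n u v) := by
  have hle : max n (2 * n - 2) ≤ 2 * n := by omega
  exact ⟨fun h => (statement17_general n u v).1 fun r hr => h r (uRX_mono hle hr),
    fun h => (statement17_general n u v).2 fun r hr => h r (uRY_mono hle hr)⟩

end RankerPaper
end

section
/- If a ranker r is condensed on a word u ∈ A*, then the number of alternating blocks of r is at most |A|, the cardinality of the alphabet A. -/
namespace RankerPaper

variable {A : Type*} [DecidableEq A]

/-!
Follow the set of letters occurring strictly inside the interval `(i_ℓ; j_ℓ)` of the chain that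
witnesses that `r` is condensed. The intervals are nested, so this set can only shrink. When the
direction changes at `Z_ℓ = X_a`, the new right end point is the leftmost `a` of the current
interval, so `a` no longer occurs inside (dually for `Y_a`). Hence each of the `m - 1` changes of
direction of an `m`-block ranker removes a letter, while the last interval still contains the
position `r(u)`, so at least one letter is left over.
-/

omit [DecidableEq A] in
theorem numBlocks_add_le_of_lt_of_not_sameDir (r : List (RLetter A)) (f : ℕ → ℕ)
    (h_le : ∀ ℓ, ℓ + 1 < r.length → f (ℓ + 1) ≤ f ℓ)
    (h_lt : ∀ ℓ z w, r[ℓ]? = some z → r[ℓ + 1]? = some w → sameDir z w = false →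
      f (ℓ + 1) < f ℓ) :
    numBlocks r + f (r.length - 1) ≤ f 0 + 1 := by
  induction r generalizing f with
  | nil => simp [numBlocks]
  | cons z t ih =>
    cases t with
    | nil => simp [numBlocks, add_comm]
    | cons w t =>
      have h_tail : numBlocks (w :: t) + f (t.length + 1) ≤ f 1 + 1 :=
        ih (fun ℓ => f (ℓ + 1)) (fun ℓ hℓ => h_le (ℓ + 1) (Nat.succ_lt_succ hℓ))
          (fun ℓ => h_lt (ℓ + 1))
      have h_le_zero : f 1 ≤ f 0 := h_le 0 (by simp)
      have h_lt_zero : sameDir z w = false → f 1 < f 0 := h_lt 0 z w rfl rfl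
      change (if sameDir z w then 0 else 1) + numBlocks (w :: t) + f (t.length + 1) ≤ f 0 + 1
      split_ifs with h_dir
      · omega
      · have := h_lt_zero (Bool.eq_false_iff.2 h_dir)
        omega

theorem isLeast_of_head?_eq_some {α : Type*} [Preorder α] {l : List α} {x : α}
    (hl : l.Pairwise (· ≤ ·)) (hx : l.head? = some x) : IsLeast {y | y ∈ l} x := by
  refine ⟨List.mem_of_head? hx, fun y hy => ?_⟩
  rw [← List.head_of_head?_eq_some hx]
  exact hl.rel_head hy

theorem isGreatest_of_getLast?_eq_some {α : Type*} [Preorder α] {l : List α} {x : α}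
    (hl : l.Pairwise (· ≤ ·)) (hx : l.getLast? = some x) : IsGreatest {y | y ∈ l} x := by
  refine ⟨List.mem_of_getLast? hx, fun y hy => ?_⟩
  rw [← List.getLast_of_getLast?_eq_some hx]
  exact hl.rel_getLast hy

omit [DecidableEq A] in
theorem lt_length_add_two_of_getElem?_sub_one_eq_some {u : List A} {a : A} {k : ℕ}
    (hk : u[k - 1]? = some a) : k < u.length + 2 := by
  have := (List.getElem?_eq_some_iff.1 hk).1
  omega

theorem isLeast_of_nextOcc_eq_some {u : List A} {a : A} {q n : ℕ} (h : nextOcc u a q = some n) :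
    IsLeast {k | q < k ∧ u[k - 1]? = some a} n := by
  have h_least := isLeast_of_head?_eq_some (List.pairwise_le_range.filter _) h
  simp only [List.mem_filter, List.mem_range, decide_eq_true_eq] at h_least
  exact ⟨h_least.1.2, fun k hk =>
    h_least.2 ⟨lt_length_add_two_of_getElem?_sub_one_eq_some hk.2, hk⟩⟩

theorem isGreatest_of_prevOcc_eq_some {u : List A} {a : A} {q n : ℕ}
    (h : prevOcc u a q = some n) :
    IsGreatest {k | 1 ≤ k ∧ k < q ∧ u[k - 1]? = some a} n := by
  have h_greatest := isGreatest_of_getLast?_eq_some (List.pairwise_le_range.filter _) h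
  simp only [List.mem_filter, List.mem_range, decide_eq_true_eq] at h_greatest
  exact ⟨h_greatest.1.2, fun k hk =>
    h_greatest.2 ⟨lt_length_add_two_of_getElem?_sub_one_eq_some hk.2.2, hk⟩⟩

/-- The set of letters of `u` occurring at positions in the open interval `(i; j)`; its cardinality
bounds the number of blocks a condensed ranker can still have inside `(i; j)`. Positions are
1-indexed, and those outside of `u` contribute nothing. -/
def lettersBetween (u : List A) (i j : ℕ) : Finset A :=
  ((Finset.Ioo i j).image fun q => u[q - 1]?).eraseNone

section lettersBetween

variable {u : List A} {a : A} {i j i' j' k : ℕ}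

theorem mem_lettersBetween :
    a ∈ lettersBetween u i j ↔ ∃ q, (i < q ∧ q < j) ∧ u[q - 1]? = some a := by
  simp only [lettersBetween, Finset.mem_eraseNone, Finset.mem_image, Finset.mem_Ioo]

theorem lettersBetween_subset_alph : lettersBetween u i j ⊆ alph u := by
  intro a ha
  obtain ⟨q, -, hq⟩ := mem_lettersBetween.1 ha
  exact List.mem_toFinset.2 (List.mem_of_getElem? hq)

theorem lettersBetween_subset_lettersBetween (hi : i ≤ i') (hj : j' ≤ j) :
    lettersBetween u i' j' ⊆ lettersBetween u i j :=
  Finset.eraseNone.monotone (Finset.image_mono _ (Finset.Ioo_subset_Ioo hi hj))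

theorem lettersBetween_nonempty (hi : i < k) (hj : k < j) (hk : k ≤ u.length) :
    (lettersBetween u i j).Nonempty :=
  ⟨u[k - 1], mem_lettersBetween.2 ⟨k, ⟨hi, hj⟩, List.getElem?_eq_getElem (by omega)⟩⟩

theorem lettersBetween_ssubset_of_nextOcc (h : nextOcc u a i = some k) (hk : k < j) :
    lettersBetween u i k ⊂ lettersBetween u i j := by
  obtain ⟨⟨hik, hka⟩, h_least⟩ := isLeast_of_nextOcc_eq_some h
  have h_mem : a ∈ lettersBetween u i j := mem_lettersBetween.2 ⟨k, ⟨hik, hk⟩, hka⟩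
  have h_notMem : a ∉ lettersBetween u i k := fun ha => by
    obtain ⟨q, ⟨hiq, hqk⟩, hqa⟩ := mem_lettersBetween.1 ha
    exact hqk.not_ge (h_least ⟨hiq, hqa⟩)
  exact (Finset.ssubset_iff_of_subset (lettersBetween_subset_lettersBetween le_rfl hk.le)).2
    ⟨a, h_mem, h_notMem⟩

theorem lettersBetween_ssubset_of_prevOcc (h : prevOcc u a j = some k) (hk : i < k) :
    lettersBetween u k j ⊂ lettersBetween u i j := by
  obtain ⟨⟨-, hkj, hka⟩, h_greatest⟩ := isGreatest_of_prevOcc_eq_some h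
  have h_mem : a ∈ lettersBetween u i j := mem_lettersBetween.2 ⟨k, ⟨hk, hkj⟩, hka⟩
  have h_notMem : a ∉ lettersBetween u k j := fun ha => by
    obtain ⟨q, ⟨hkq, hqj⟩, hqa⟩ := mem_lettersBetween.1 ha
    exact hkq.not_ge (h_greatest ⟨Nat.one_le_of_lt hkq, hqj, hqa⟩)
  exact (Finset.ssubset_iff_of_subset (lettersBetween_subset_lettersBetween hk.le le_rfl)).2
    ⟨a, h_mem, h_notMem⟩

end lettersBetween

theorem Condensed.exists_chain_subset_alph {u : List A} {r : List (RLetter A)}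
    (h : Condensed u r) :
    ∃ S : ℕ → Finset A, S 0 ⊆ alph u ∧
      (∀ ℓ, ℓ + 1 < r.length → S (ℓ + 1) ⊆ S ℓ) ∧
      (∀ ℓ z w, r[ℓ]? = some z → r[ℓ + 1]? = some w → sameDir z w = false →
        S (ℓ + 1) ⊂ S ℓ) ∧
      (S (r.length - 1)).Nonempty := by
  obtain ⟨p, i, j, hp, -, hj_zero, -, -, hXY, hYX, h_nested, hip, hpj⟩ := h
  have h_step (ℓ : ℕ) (hℓ : ℓ + 1 < r.length) :
      i ℓ ≤ i (ℓ + 1) ∧ j (ℓ + 1) ≤ j ℓ ∧ (i ℓ < i (ℓ + 1) ∨ j (ℓ + 1) < j ℓ) :=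
    h_nested (ℓ + 1) le_add_self hℓ
  have hj_le (ℓ : ℕ) (hℓ : ℓ < r.length) : j ℓ ≤ u.length + 1 := by
    induction ℓ with
    | zero => exact hj_zero.le
    | succ ℓ ih => exact (h_step ℓ hℓ).2.1.trans (ih (Nat.lt_of_succ_lt hℓ))
  have hr : r ≠ [] := by
    rintro rfl
    simp [evalR] at hp
  refine ⟨fun ℓ => lettersBetween u (i ℓ) (j ℓ), lettersBetween_subset_alph,
    fun ℓ hℓ => lettersBetween_subset_lettersBetween (h_step ℓ hℓ).1 (h_step ℓ hℓ).2.1,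
    fun ℓ z w hz hw h_dir => ?_, ?_⟩
  · obtain ⟨-, -, h_strict⟩ := h_step ℓ (List.getElem?_eq_some_iff.1 hw).1
    match z, w with
    | .X a, .Y b =>
      obtain ⟨hi, hj⟩ : i (ℓ + 1) = i ℓ ∧ nextOcc u a (i ℓ) = some (j (ℓ + 1)) :=
        hXY (ℓ + 1) a b le_add_self hz hw
      simpa only [hi] using lettersBetween_ssubset_of_nextOcc hj (by omega)
    | .Y a, .X b =>
      obtain ⟨hi, hj⟩ : prevOcc u a (j ℓ) = some (i (ℓ + 1)) ∧ j (ℓ + 1) = j ℓ :=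
        hYX (ℓ + 1) a b le_add_self hz hw
      simpa only [hj] using lettersBetween_ssubset_of_prevOcc hi (by omega)
  · have h_last : r.length - 1 < r.length := Nat.sub_one_lt (mt List.length_eq_zero_iff.1 hr)
    exact lettersBetween_nonempty hip hpj (Nat.lt_succ_iff.1 (hpj.trans_le (hj_le _ h_last)))

theorem statement18_general (u : List A) (r : List (RLetter A)) (h : Condensed u r) :
    numBlocks r ≤ (alph u).card := by
  obtain ⟨S, h_zero, h_subset, h_ssubset, h_last⟩ := h.exists_chain_subset_alph
  have h_count : numBlocks r + (S (r.length - 1)).card ≤ (S 0).card + 1 :=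
    numBlocks_add_le_of_lt_of_not_sameDir r (fun ℓ => (S ℓ).card)
      (fun ℓ hℓ => Finset.card_le_card (h_subset ℓ hℓ))
      (fun ℓ z w hz hw h_dir => Finset.card_lt_card (h_ssubset ℓ z w hz hw h_dir))
  have h_pos : 0 < (S (r.length - 1)).card := h_last.card_pos
  have h_alph : (S 0).card ≤ (alph u).card := Finset.card_le_card h_zero
  omega

/-- A ranker condensed on a word over `A` has at most `|A|`
alternating blocks. -/
theorem statement18 [Fintype A] (u : List A) (r : List (RLetter A))
    (h : Condensed u r) : numBlocks r ≤ Fintype.card A :=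
  (statement18_general u r h).trans (Finset.card_le_univ _)

end RankerPaper
end
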